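/- Fix density matrices ρ_1,…,ρ_n on ℂ^d with priors q_1,…,q_n > 0 summing to 1 and write ρ̄ = Σ_ν q_ν ρ_ν. Define the conditional entropy of the message given a POVM ε = (E_1,…,E_m) by H(N|ε) = −Σ_{y=1}^m Σ_{ν=1}^n q_ν tr(E_y ρ_ν) · log( q_ν tr(E_y ρ_ν) / tr(E_y ρ̄) ), with the convention that terms with q_ν tr(E_y ρ_ν) = 0 are zero. Then the negative conditional entropy is a resource monotone: if β = (B_1,…,B_{m′}) is a post-processing of α = (A_1,…,A_m), then H(N|α) ≤ H(N|β). Equivalently, the mutual information I(N:ε) = H(N) − H(N|ε), where H(N) = −Σ_ν q_ν log q_ν, satisfies I(N:β) ≤ I(N:α). -/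

import Mathlib

open Matrix
open scoped ComplexOrder

/-- The probability `tr(A ρ)` (real part of the trace). -/
noncomputable def tprob {d : ℕ} (ρ A : Matrix (Fin d) (Fin d) ℂ) : ℝ :=
  ((A * ρ).trace).re

/-- A POVM: a finite tuple of positive semidefinite matrices summing to the identity. -/
def IsPOVM {d m : ℕ} (A : Fin m → Matrix (Fin d) (Fin d) ℂ) : Prop :=
  (∀ y, (A y).PosSemidef) ∧ ∑ y, A y = 1

/-- The conditional entropy `H(N|ε)` of the message given the measurement outcome.
Terms with vanishing joint probability `q_ν tr(E_y ρ_ν) = 0` vanish automatically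
(`Real.log 0 = 0` and the factor is `0`). -/
noncomputable def condEnt {d n m : ℕ} (q : Fin n → ℝ)
    (ρ : Fin n → Matrix (Fin d) (Fin d) ℂ)
    (E : Fin m → Matrix (Fin d) (Fin d) ℂ) : ℝ :=
  -∑ y, ∑ ν, q ν * tprob (ρ ν) (E y) *
      Real.log (q ν * tprob (ρ ν) (E y) / tprob (∑ μ, ((q μ : ℂ) • ρ μ)) (E y))

lemma tprob_nonneg' {d : ℕ} {ρ A : Matrix (Fin d) (Fin d) ℂ} (hρ : ρ.PosSemidef)
    (hA : A.PosSemidef) : 0 ≤ tprob ρ A := by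
  obtain ⟨m, v, hv⟩ := Matrix.posSemidef_iff_eq_sum_vecMulVec.mp hA
  have h : 0 ≤ (A * ρ).trace := by
    rw [hv, Finset.sum_mul, Matrix.trace_sum]
    refine Finset.sum_nonneg fun i _ => ?_
    rw [Matrix.trace_mul_comm, Matrix.mul_vecMulVec, Matrix.trace_vecMulVec, dotProduct_comm]
    exact hρ.dotProduct_mulVec_nonneg _
  exact (Complex.le_def.mp h).1

lemma tprob_sum_left {d n : ℕ} (q : Fin n → ℝ) (ρ : Fin n → Matrix (Fin d) (Fin d) ℂ)
    (A : Matrix (Fin d) (Fin d) ℂ) :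
    tprob (∑ μ, ((q μ : ℂ) • ρ μ)) A = ∑ μ, q μ * tprob (ρ μ) A := by
  simp [tprob, Finset.mul_sum, Matrix.trace_sum, Matrix.trace_smul]

lemma tprob_sum_right {d n : ℕ} (q : Fin n → ℝ) (A : Fin n → Matrix (Fin d) (Fin d) ℂ)
    (ρ : Matrix (Fin d) (Fin d) ℂ) :
    tprob ρ (∑ μ, ((q μ : ℂ) • A μ)) = ∑ μ, q μ * tprob ρ (A μ) := by
  simp [tprob, Finset.sum_mul, Matrix.trace_sum, Matrix.trace_smul]

lemma pt_ineq (a b c : ℝ) (ha : 0 ≤ a) (hb : 0 ≤ b) (hab : b = 0 → a = 0) (hc : 0 < c) :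
    a * Real.log c + a - b * c ≤ a * Real.log (a / b) := by
  rcases ha.eq_or_lt with rfl | ha
  · simp; positivity
  have hb : 0 < b := hb.lt_of_ne' fun h => ha.ne' (hab h)
  have h := Real.log_le_sub_one_of_pos (show 0 < c / (a / b) by positivity)
  rw [Real.log_div hc.ne' (by positivity)] at h
  have h2 := mul_le_mul_of_nonneg_left h ha.le
  have h3 : a * (c / (a / b) - 1) = b * c - a := by field_simp
  rw [h3] at h2
  linarith

lemma log_sum_ineq {m : ℕ} (a b : Fin m → ℝ) (ha : ∀ j, 0 ≤ a j) (hb : ∀ j, 0 ≤ b j)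
    (hab : ∀ j, b j = 0 → a j = 0) :
    (∑ j, a j) * Real.log ((∑ j, a j) / ∑ j, b j) ≤ ∑ j, a j * Real.log (a j / b j) := by
  rcases (Finset.sum_nonneg fun j (_ : j ∈ Finset.univ) => ha j).eq_or_lt with hS | hS
  · have h0 : ∀ j, a j = 0 := by
      have := (Finset.sum_eq_zero_iff_of_nonneg fun j (_ : j ∈ Finset.univ) => ha j).1 hS.symm
      simpa using this
    simp [h0]
  have hT : 0 < ∑ j, b j := by
    refine (Finset.sum_nonneg fun j _ => hb j).lt_of_ne' fun h => ?_
    have h0 := (Finset.sum_eq_zero_iff_of_nonneg fun j (_ : j ∈ Finset.univ) => hb j).1 h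
    exact hS.ne' (Finset.sum_eq_zero fun j hj => hab j (h0 j hj))
  have key := Finset.sum_le_sum fun j (_ : j ∈ Finset.univ) =>
    pt_ineq (a j) (b j) ((∑ j, a j) / ∑ j, b j) (ha j) (hb j) (hab j) (div_pos hS hT)
  rw [Finset.sum_sub_distrib, Finset.sum_add_distrib, ← Finset.sum_mul, ← Finset.sum_mul,
    mul_div_cancel₀ _ hT.ne'] at key
  linarith

/-- The negative conditional entropy `−H(N|ε)` is a resource monotone: under
post-processing `H(N|α) ≤ H(N|β)`; equivalently the mutual information
`I(N:ε) = H(N) − H(N|ε)` satisfies `I(N:β) ≤ I(N:α)`. -/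
theorem neg_cond_entropy_monotone {d n : ℕ}
    (ρ : Fin n → Matrix (Fin d) (Fin d) ℂ)
    (hρ : ∀ ν, (ρ ν).PosSemidef ∧ (ρ ν).trace = 1)
    (q : Fin n → ℝ) (hq : ∀ ν, 0 < q ν) (hqs : ∑ ν, q ν = 1)
    {m m' : ℕ}
    (A : Fin m → Matrix (Fin d) (Fin d) ℂ) (hA : IsPOVM A)
    (B : Fin m' → Matrix (Fin d) (Fin d) ℂ) (hB : IsPOVM B)
    (p : Fin m' → Fin m → ℝ) (hp0 : ∀ i j, 0 ≤ p i j)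
    (hp1 : ∀ j, ∑ i, p i j = 1)
    (hpost : ∀ i, B i = ∑ j, ((p i j : ℂ) • A j)) :
    condEnt q ρ A ≤ condEnt q ρ B
    ∧ (-∑ ν, q ν * Real.log (q ν)) - condEnt q ρ B
        ≤ (-∑ ν, q ν * Real.log (q ν)) - condEnt q ρ A := by
  have main : condEnt q ρ A ≤ condEnt q ρ B := by
    unfold condEnt
    apply neg_le_neg
    rw [Finset.sum_comm, Finset.sum_comm (s := (Finset.univ : Finset (Fin m)))]
    refine Finset.sum_le_sum fun ν _ => ?_
    have hy : ∀ μ j, 0 ≤ q μ * tprob (ρ μ) (A j) := fun μ j =>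
      mul_nonneg (hq μ).le (tprob_nonneg' (hρ μ).1 (hA.1 j))
    set b : Fin m → ℝ := fun j => tprob (∑ μ, ((q μ : ℂ) • ρ μ)) (A j) with hbdef
    have hb : ∀ j, b j = ∑ μ, q μ * tprob (ρ μ) (A j) := fun j => tprob_sum_left _ _ _
    have hb0 : ∀ j, 0 ≤ b j := fun j => by
      rw [hb]; exact Finset.sum_nonneg fun μ _ => hy μ j
    have hab : ∀ j, b j = 0 → q ν * tprob (ρ ν) (A j) = 0 := fun j h => by
      rw [hb] at h
      exact (Finset.sum_eq_zero_iff_of_nonneg fun μ _ => hy μ j).1 h ν (Finset.mem_univ _)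
    calc _ ≤ ∑ i, ∑ j, p i j * (q ν * tprob (ρ ν) (A j) *
              Real.log (q ν * tprob (ρ ν) (A j) / b j)) := by
            refine Finset.sum_le_sum fun i _ => ?_
            have h := log_sum_ineq (fun j => p i j * (q ν * tprob (ρ ν) (A j)))
              (fun j => p i j * b j) (fun j => mul_nonneg (hp0 i j) (hy ν j))
              (fun j => mul_nonneg (hp0 i j) (hb0 j)) (fun j h => by
                rcases mul_eq_zero.1 h with h | h
                · simp [h]
                · simp only [hab j h, mul_zero])
            have e1 : q ν * tprob (ρ ν) (B i) = ∑ j, p i j * (q ν * tprob (ρ ν) (A j)) := by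
              rw [hpost, tprob_sum_right, Finset.mul_sum]
              exact Finset.sum_congr rfl fun j _ => by ring
            have e2 : tprob (∑ μ, ((q μ : ℂ) • ρ μ)) (B i) = ∑ j, p i j * b j := by
              rw [hpost, tprob_sum_right]
            rw [e1, e2]
            refine h.trans (Finset.sum_le_sum fun j _ => ?_)
            rcases eq_or_ne (p i j) 0 with h0 | h0
            · simp [h0]
            · simp only [mul_div_mul_left _ _ h0]
              rw [mul_assoc]
      _ = _ := by
            rw [Finset.sum_comm]
            refine Finset.sum_congr rfl fun j _ => ?_
            rw [← Finset.sum_mul, hp1, one_mul]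
  exact ⟨main, by linarith⟩
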